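/- For any cBCK-algebra A, the spectrum X(A) is compact if and only if A is finitely generated as an ideal, i.e., there exist finitely many elements u₁,…,u_k ∈ A such that the ideal generated by {u₁,…,u_k} is all of A. -/

import Mathlib

/-!
The proof rests on prime separation: for an ideal `I` and `a ∉ I` there is a prime ideal
`P ⊇ I` with `a ∉ P`. Zorn's lemma gives an ideal `P ⊇ I` maximal among those avoiding `a`.
For an ideal `P` and any `y`, the quotient `(P : y) = {z | z ∧ y ∈ P}` is again an ideal
containing `P`, because `(z ∧ y)·(w ∧ y) ≤ (z·w) ∧ y`. If `x ∧ y ∈ P` and `x, y ∉ P`, then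
`(P : y)` strictly contains `P` (it contains `x`), so `a ∧ y ∈ P` by maximality; now `(P : a)`
strictly contains `P` (it contains `y`), so `a = a ∧ a ∈ P`, a contradiction.

Hence a union of basic sets `σ(I i)` is the whole spectrum exactly when `⋃ i, I i` generates `A`.
Since ideal generation is finitary, finite generation of `A` lets one pass to a finite subcover;
conversely a finite subcover of the cover by all `σ(a)` yields finitely many generators.
-/


universe u v

/-- A commutative BCK-algebra structure on a type `A`. -/
structure CBCK (A : Type u) where
  op : A → A → A
  zero : A
  op_op_comm : ∀ x y z : A, op (op x y) z = op (op x z) y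
  op_comm : ∀ x y : A, op x (op x y) = op y (op y x)
  op_self : ∀ x : A, op x x = zero
  op_zero : ∀ x : A, op x zero = x

namespace CBCK

variable {A : Type u}

/-- The meet `x ∧ y := y·(y·x)`. -/
def meet (C : CBCK A) (x y : A) : A := C.op y (C.op y x)

/-- A subset `I` is an ideal: `0 ∈ I` and `x·y ∈ I`, `y ∈ I` imply `x ∈ I`. -/
def IsIdeal (C : CBCK A) (I : Set A) : Prop :=
  C.zero ∈ I ∧ ∀ x y : A, C.op x y ∈ I → y ∈ I → x ∈ I

/-- A prime ideal: a proper ideal such that `x ∧ y ∈ P` implies `x ∈ P` or `y ∈ P`. -/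
def IsPrimeIdeal (C : CBCK A) (P : Set A) : Prop :=
  C.IsIdeal P ∧ P ≠ Set.univ ∧ ∀ x y : A, C.meet x y ∈ P → x ∈ P ∨ y ∈ P

/-- The ideal generated by a subset `S`: the smallest ideal containing `S`. -/
def idealGen (C : CBCK A) (S : Set A) : Set A :=
  ⋂₀ {I : Set A | C.IsIdeal I ∧ S ⊆ I}

/-- The spectrum: the set of prime ideals. -/
def Spec (C : CBCK A) : Type u := {P : Set A // C.IsPrimeIdeal P}

/-- `σ(I) = {P ∈ X(A) : I ⊄ P}`. -/
def sigmaSet (C : CBCK A) (I : Set A) : Set C.Spec := {P : C.Spec | ¬ I ⊆ P.1}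

/-- `σ(a) = σ((a])`. -/
def sigmaPt (C : CBCK A) (a : A) : Set C.Spec := C.sigmaSet (C.idealGen {a})

/-- Iterated subtraction: `x·y⁰ = x`, `x·yⁿ⁺¹ = (x·yⁿ)·y`. -/
def opPow (C : CBCK A) (x y : A) : ℕ → A
  | 0 => x
  | n + 1 => C.op (C.opPow x y n) y

/-- A subset `B` is a subalgebra: contains `0` and is closed under the operation. -/
def IsSubalg (C : CBCK A) (B : Set A) : Prop :=
  C.zero ∈ B ∧ ∀ x ∈ B, ∀ y ∈ B, C.op x y ∈ B

/-- The subalgebra generated by a subset. -/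
def subalgGen (C : CBCK A) (S : Set A) : Set A :=
  ⋂₀ {B : Set A | C.IsSubalg B ∧ S ⊆ B}

/-- `I` is an ideal of the subalgebra `B`. -/
def IsIdealIn (C : CBCK A) (B I : Set A) : Prop :=
  I ⊆ B ∧ C.zero ∈ I ∧ ∀ x ∈ B, ∀ y ∈ B, C.op x y ∈ I → y ∈ I → x ∈ I

/-- `P` is a prime ideal of the subalgebra `B`. -/
def IsPrimeIdealIn (C : CBCK A) (B P : Set A) : Prop :=
  C.IsIdealIn B P ∧ P ≠ B ∧ ∀ x ∈ B, ∀ y ∈ B, C.meet x y ∈ P → x ∈ P ∨ y ∈ P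

/-- The spectrum of a subalgebra `B`: its set of prime ideals. -/
def SpecIn (C : CBCK A) (B : Set A) : Type u := {P : Set A // C.IsPrimeIdealIn B P}

/-- The annihilator `S* = {a : a ∧ s = 0 for all s ∈ S}`. -/
def ann (C : CBCK A) (S : Set A) : Set A := {a : A | ∀ s ∈ S, C.meet a s = C.zero}

/-- The annihilator of `S` computed inside the subalgebra `B`. -/
def annIn (C : CBCK A) (B S : Set A) : Set A :=
  {a : A | a ∈ B ∧ ∀ s ∈ S, C.meet a s = C.zero}

/-- `A` is involutory: every ideal `I` satisfies `I = I**`. -/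
def Involutory (C : CBCK A) : Prop := ∀ I : Set A, C.IsIdeal I → C.ann (C.ann I) = I

/-- The subalgebra `B` is involutory. -/
def InvolutoryIn (C : CBCK A) (B : Set A) : Prop :=
  ∀ I : Set A, C.IsIdealIn B I → C.annIn B (C.annIn B I) = I

/-- The data of `A` being the cBCK-union of the family of subalgebras `Aset`:
the subalgebras cover `A`, pairwise intersect in `{0}`, and the operation between
distinct members is `x·y = x`. -/
def IsUnionFamily (C : CBCK A) {Λ : Type v} (Aset : Λ → Set A) : Prop :=
  (∀ x : A, ∃ l : Λ, x ∈ Aset l) ∧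
  (∀ l : Λ, C.IsSubalg (Aset l)) ∧
  (∀ l m : Λ, l ≠ m → Aset l ∩ Aset m = {C.zero}) ∧
  (∀ l m : Λ, l ≠ m → ∀ x ∈ Aset l, ∀ y ∈ Aset m, C.op x y = x)

end CBCK

namespace CBCK

variable {A : Type u} (C : CBCK A)

theorem zero_op (x : A) : C.op C.zero x = C.zero := by
  have h : C.op C.zero (C.op C.zero x) = C.zero := by
    rw [← C.op_comm x C.zero, C.op_zero, C.op_self]
  calc C.op C.zero x = C.op (C.op C.zero (C.op C.zero x)) x := by rw [h]
    _ = C.op (C.op C.zero x) (C.op C.zero x) := C.op_op_comm _ _ _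
    _ = C.zero := C.op_self _

theorem op_le (x y : A) : C.op (C.op x y) x = C.zero := by
  rw [C.op_op_comm, C.op_self, C.zero_op]

/-- The inequality `(x·y)·(x·z) ≤ z·y`. -/
theorem op_op_op_le (x y z : A) :
    C.op (C.op (C.op x y) (C.op x z)) (C.op z y) = C.zero := by
  rw [C.op_op_comm x y, C.op_comm x z, C.op_op_comm z _ y, C.op_le]

theorem le_trans {x y z : A} (hxy : C.op x y = C.zero) (hyz : C.op y z = C.zero) :
    C.op x z = C.zero := by
  have h := C.op_op_op_le x z y
  rwa [hyz, C.op_zero, hxy, C.op_zero] at h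

theorem op_antitone {y z : A} (x : A) (h : C.op z y = C.zero) :
    C.op (C.op x y) (C.op x z) = C.zero := by
  have h' := C.op_op_op_le x y z
  rwa [h, C.op_zero] at h'

theorem op_monotone {x y : A} (z : A) (h : C.op x y = C.zero) :
    C.op (C.op x z) (C.op y z) = C.zero := by
  have h' := C.op_op_op_le x z y
  rwa [h, C.op_zero] at h'

theorem meet_comm (x y : A) : C.meet x y = C.meet y x := C.op_comm _ _

theorem meet_self (x : A) : C.meet x x = x := by
  rw [meet, C.op_self, C.op_zero]

theorem meet_le_right (x y : A) : C.op (C.meet x y) y = C.zero := C.op_le _ _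

theorem meet_le_left (x y : A) : C.op (C.meet x y) x = C.zero := by
  rw [C.meet_comm]; exact C.op_le _ _

theorem le_meet {u x y : A} (hx : C.op u x = C.zero) (hy : C.op u y = C.zero) :
    C.op u (C.meet x y) = C.zero := by
  -- since `u ≤ y`, `u = y·(y·u)`, and `y·x ≤ y·u` because `u ≤ x`
  have hu : C.op y (C.op y u) = u := by rw [C.op_comm, hy, C.op_zero]
  have h := C.op_antitone y (C.op_antitone y hx)
  rwa [hu] at h

theorem op_meet_self (u w : A) : C.op u (C.meet u w) = C.op u w := by
  rw [C.meet_comm, meet, C.op_comm u (C.op u w), C.op_le, C.op_zero]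

/-- The inequality `(z ∧ y)·(w ∧ y) ≤ (z·w) ∧ y`, which makes ideal quotients ideals. -/
theorem meet_op_meet_le (z w y : A) :
    C.op (C.op (C.meet z y) (C.meet w y)) (C.meet (C.op z w) y) = C.zero := by
  apply C.le_meet
  · have h₁ : C.op (C.meet (C.meet z y) w) (C.meet w y) = C.zero :=
      C.le_meet (C.meet_le_right _ _) (C.le_trans (C.meet_le_left _ _) (C.meet_le_right _ _))
    have h₂ := C.op_antitone (C.meet z y) h₁
    rw [C.op_meet_self] at h₂
    exact C.le_trans h₂ (C.op_monotone w (C.meet_le_left _ _))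
  · exact C.le_trans (C.op_le _ _) (C.meet_le_right _ _)

variable {C}

theorem IsIdeal.mem_of_le {I : Set A} (hI : C.IsIdeal I) {x y : A} (h : C.op x y = C.zero)
    (hy : y ∈ I) : x ∈ I :=
  hI.2 x y (h ▸ hI.1) hy

/-- The ideal quotient `(P : y) = {z | z ∧ y ∈ P}` is an ideal. -/
theorem IsIdeal.quotient {P : Set A} (hP : C.IsIdeal P) (y : A) :
    C.IsIdeal {z | C.meet z y ∈ P} :=
  ⟨hP.mem_of_le (C.meet_le_left _ _) hP.1, fun z w hzw hw =>
    hP.2 _ _ (hP.mem_of_le (C.meet_op_meet_le z w y) hzw) hw⟩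

/-- Prime separation. -/
theorem IsIdeal.exists_prime {I : Set A} (hI : C.IsIdeal I) {a : A} (ha : a ∉ I) :
    ∃ P, C.IsPrimeIdeal P ∧ I ⊆ P ∧ a ∉ P := by
  obtain ⟨P, hIP, hmax⟩ := zorn_subset_nonempty {J : Set A | C.IsIdeal J ∧ a ∉ J} (by
    intro c hc hchain hne
    obtain ⟨J₀, hJ₀⟩ := hne
    refine ⟨⋃₀ c, ⟨⟨⟨J₀, hJ₀, (hc hJ₀).1.1⟩, ?_⟩, ?_⟩, fun s hs => Set.subset_sUnion_of_mem hs⟩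
    · rintro x y ⟨J, hJ, hx⟩ ⟨K, hK, hy⟩
      rcases hchain.total hJ hK with h | h
      · exact ⟨K, hK, (hc hK).1.2 x y (h hx) hy⟩
      · exact ⟨J, hJ, (hc hJ).1.2 x y hx (h hy)⟩
    · rintro ⟨J, hJ, h⟩
      exact (hc hJ).2 h) I ⟨hI, ha⟩
  obtain ⟨hP, haP⟩ := hmax.prop
  have key : ∀ x y, C.meet x y ∈ P → x ∉ P → C.meet a y ∈ P := by
    intro x y hxy hx
    by_contra hay
    exact hx (hmax.le_of_ge (y := {z | C.meet z y ∈ P}) ⟨hP.quotient y, hay⟩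
      (fun z hz => hP.mem_of_le (C.meet_le_left z y) hz) hxy)
  refine ⟨P, ⟨hP, fun h => haP (h ▸ Set.mem_univ a), fun x y hxy => ?_⟩, hIP, haP⟩
  by_contra! h
  have hya : C.meet y a ∈ P := by
    rw [C.meet_comm]; exact key x y hxy h.1
  have haa := key y a hya h.2
  rw [C.meet_self] at haa
  exact haP haa

variable (C)

theorem isIdeal_idealGen (S : Set A) : C.IsIdeal (C.idealGen S) :=
  ⟨fun _ hI => hI.1.1, fun x y hxy hy I hI => hI.1.2 x y (hxy I hI) (hy I hI)⟩

theorem subset_idealGen (S : Set A) : S ⊆ C.idealGen S := fun _ hx _ hI => hI.2 hx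

variable {C}

theorem idealGen_subset {S I : Set A} (hI : C.IsIdeal I) (h : S ⊆ I) : C.idealGen S ⊆ I :=
  fun _ hx => hx I ⟨hI, h⟩

theorem idealGen_mono {S T : Set A} (h : S ⊆ T) : C.idealGen S ⊆ C.idealGen T :=
  idealGen_subset (C.isIdeal_idealGen T) (h.trans (C.subset_idealGen T))

/-- Ideal generation is finitary. -/
theorem exists_finite_of_mem_idealGen {T : Set A} {x : A} (hx : x ∈ C.idealGen T) :
    ∃ F : Set A, F.Finite ∧ F ⊆ T ∧ x ∈ C.idealGen F := by
  refine idealGen_subset (I := {x | ∃ F : Set A, F.Finite ∧ F ⊆ T ∧ x ∈ C.idealGen F})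
    ⟨⟨∅, Set.finite_empty, Set.empty_subset _, (C.isIdeal_idealGen _).1⟩, ?_⟩ ?_ hx
  · rintro x y ⟨F, hF, hFT, hxF⟩ ⟨G, hG, hGT, hyG⟩
    exact ⟨F ∪ G, hF.union hG, Set.union_subset hFT hGT, (C.isIdeal_idealGen _).2 x y
      (idealGen_mono Set.subset_union_left hxF) (idealGen_mono Set.subset_union_right hyG)⟩
  · intro y hy
    exact ⟨{y}, Set.finite_singleton y, Set.singleton_subset_iff.2 hy, C.subset_idealGen _ rfl⟩

/-- A set contained in no prime ideal generates the whole algebra. -/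
theorem idealGen_eq_univ_of_forall {S : Set A} (h : ∀ P : C.Spec, ¬ S ⊆ P.1) :
    C.idealGen S = Set.univ := by
  by_contra hne
  obtain ⟨a, ha⟩ := (Set.ne_univ_iff_exists_notMem _).1 hne
  obtain ⟨P, hP, hSP, -⟩ := (C.isIdeal_idealGen S).exists_prime ha
  exact h ⟨P, hP⟩ ((C.subset_idealGen S).trans hSP)

end CBCK

/-- The spectrum of a cBCK-algebra is compact iff the algebra is
finitely generated as an ideal. -/
theorem spec_compact_iff_fg {A : Type u} (C : CBCK A)
    [ts : TopologicalSpace C.Spec]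
    (hT : ∀ s : Set C.Spec, IsOpen s ↔ ∃ I : Set A, C.IsIdeal I ∧ s = C.sigmaSet I) :
    CompactSpace C.Spec ↔ ∃ S : Set A, S.Finite ∧ C.idealGen S = Set.univ := by
  constructor
  · intro hc
    obtain ⟨t, ht⟩ := isCompact_univ.elim_finite_subcover (fun a : A => C.sigmaPt a)
      (fun a => (hT _).2 ⟨_, C.isIdeal_idealGen {a}, rfl⟩) (by
        intro P _
        obtain ⟨a, ha⟩ := (Set.ne_univ_iff_exists_notMem _).1 P.2.2.1
        exact Set.mem_iUnion.2 ⟨a, fun h => ha (h (C.subset_idealGen _ rfl))⟩)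
    refine ⟨t, t.finite_toSet, CBCK.idealGen_eq_univ_of_forall fun P htP => ?_⟩
    obtain ⟨a, hat, haP⟩ := Set.mem_iUnion₂.1 (ht (Set.mem_univ P))
    exact haP (CBCK.idealGen_subset P.2.1 (Set.singleton_subset_iff.2 (htP hat)))
  · rintro ⟨S, hS, hSu⟩
    refine ⟨isCompact_of_finite_subcover fun {ι} U hU hcov => ?_⟩
    choose I hI hUI using fun i => (hT (U i)).1 (hU i)
    have hgen : C.idealGen (⋃ i, I i) = Set.univ :=
      CBCK.idealGen_eq_univ_of_forall fun P hP => by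
        obtain ⟨i, hi⟩ := Set.mem_iUnion.1 (hcov (Set.mem_univ P))
        rw [hUI i] at hi
        exact hi ((Set.subset_iUnion I i).trans hP)
    have hfin : ∀ x : A, ∃ F : Set A, F.Finite ∧ F ⊆ ⋃ i, I i ∧ x ∈ C.idealGen F := fun x =>
      CBCK.exists_finite_of_mem_idealGen (hgen ▸ Set.mem_univ x)
    choose F hF hFI hxF using hfin
    obtain ⟨t, ht, htF⟩ := Set.finite_subset_iUnion (hS.biUnion fun x _ => hF x)
      (Set.iUnion₂_subset fun x _ => hFI x)
    refine ⟨ht.toFinset, fun P _ => ?_⟩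
    by_contra hP
    -- If no `I i` with `i ∈ t` escapes `P`, then `P` contains `S`, hence everything.
    have hIP : ∀ i ∈ t, I i ⊆ P.1 := by
      intro i hi
      by_contra h
      refine hP (Set.mem_iUnion₂.2 ⟨i, ht.mem_toFinset.2 hi, ?_⟩)
      rw [hUI i]
      exact h
    have hSP : S ⊆ P.1 := fun x hx =>
      CBCK.idealGen_subset P.2.1 (((Set.subset_biUnion_of_mem (u := F) hx).trans htF).trans
        (Set.iUnion₂_subset hIP)) (hxF x)
    exact P.2.2.1 (Set.univ_subset_iff.1 (hSu ▸ CBCK.idealGen_subset P.2.1 hSP))
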